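/- Let d ≥ 2 and 0 < s < d be integers, let Σ = {A, H, T, X} be a four-element set, and let W₀ be the set of multisets of size d over Σ of one of the following three forms: one A and d−1 X's; s+1 H's and d−s−1 X's; d−s+1 T's and s−1 X's. Set 𝐀 = {X}, 𝐇 = {H,X}, 𝐓 = {T,X}, 𝐗 = {A,H,T,X}. Then for every d-tuple (S₁,…,S_d) with each S_i ∈ {𝐀, 𝐇, 𝐓, 𝐗}, there exist x₁ ∈ S₁, …, x_d ∈ S_d with the multiset {x₁,…,x_d} ∈ W₀ if and only if some S_i equals 𝐗, or at least s+1 of the S_i equal 𝐇, or at least d−s+1 of the S_i equal 𝐓. -/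

import Mathlib

/-- The four-letter alphabet `Σ = {A, H, T, X}`. -/
inductive Sig : Type
  | A | H | T | X
deriving DecidableEq

instance : Fintype Sig where
  elems := ⟨[Sig.A, Sig.H, Sig.T, Sig.X], by decide⟩
  complete := by intro x; cases x <;> decide

/-- The multiset of values of a tuple. -/
def tupleMultiset {n : ℕ} (f : Fin n → Sig) : Multiset Sig :=
  (Finset.univ : Finset (Fin n)).val.map f

/-- Membership in the white constraint `W₀` of `FDSO(s)`: the multiset consists of one `A`
and `d-1` `X`'s, or of `s+1` `H`'s and `d-s-1` `X`'s, or of `d-s+1` `T`'s and `s-1` `X`'s. -/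
def InW0 (d s : ℕ) (m : Multiset Sig) : Prop :=
  m = Sig.A ::ₘ Multiset.replicate (d - 1) Sig.X ∨
  m = Multiset.replicate (s + 1) Sig.H + Multiset.replicate (d - s - 1) Sig.X ∨
  m = Multiset.replicate (d - s + 1) Sig.T + Multiset.replicate (s - 1) Sig.X

/-!
Every multiset in `W₀` consists of copies of a single letter `c ≠ X` padded with `X`'s. When `X`
lies in all the sets, such a multiset with `k` copies of `c` can be chosen exactly when at least
`k` of the sets contain `c`. Among the sets `𝐀, 𝐇, 𝐓, 𝐗`, the letter `A` lies only in `𝐗`, while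
`H` lies only in `𝐇` and `𝐗`, and `T` only in `𝐓` and `𝐗`. Hence once no set equals `𝐗`, these
counts are the numbers of sets equal to `𝐇` and to `𝐓`.
-/

section Choice

variable {ι α : Type*} [Fintype ι]

theorem count_map_univ_val_eq_ncard [DecidableEq α] (f : ι → α) (c : α) :
    (Finset.univ.val.map f).count c = {i | f i = c}.ncard := by
  rw [Multiset.count_map, Set.ncard_eq_toFinset_card']
  simp only [Finset.card_def, Set.toFinset_ofPred, Finset.filter_val, eq_comm]

theorem map_univ_val_piecewise_const [DecidableEq ι] (t : Finset ι) (c x : α) :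
    Finset.univ.val.map (t.piecewise (fun _ => c) (fun _ => x)) =
      Multiset.replicate t.card c + Multiset.replicate (Fintype.card ι - t.card) x := by
  have univ_split : (Finset.univ : Finset ι).val = t.val + tᶜ.val := by
    rw [← Finset.union_compl t, ← Finset.disjUnion_eq_union _ _ disjoint_compl_right,
      Finset.disjUnion_val]
  have map_inside : t.val.map (t.piecewise (fun _ => c) (fun _ => x)) =
      Multiset.replicate t.card c :=
    (Multiset.map_congr (g := fun _ => c) rfl fun _ hi =>
      t.piecewise_eq_of_mem _ _ hi).trans (Multiset.map_const' _ _)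
  have map_outside : tᶜ.val.map (t.piecewise (fun _ => c) (fun _ => x)) =
      Multiset.replicate tᶜ.card x :=
    (Multiset.map_congr (g := fun _ => x) rfl fun _ hi =>
      t.piecewise_eq_of_notMem _ _ (Finset.mem_compl.1 hi)).trans (Multiset.map_const' _ _)
  rw [univ_split, Multiset.map_add, map_inside, map_outside, Finset.card_compl]

theorem exists_choice_map_eq_replicate_add_replicate_iff {S : ι → Set α} {c x : α}
    (hx : ∀ i, x ∈ S i) (hcx : c ≠ x) (k : ℕ) :
    (∃ f : ι → α, (∀ i, f i ∈ S i) ∧ Finset.univ.val.map f =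
      Multiset.replicate k c + Multiset.replicate (Fintype.card ι - k) x) ↔
    k ≤ {i | c ∈ S i}.ncard := by
  classical
  constructor
  · rintro ⟨f, hf, hmap⟩
    calc k = (Finset.univ.val.map f).count c := by
          rw [hmap, Multiset.count_add, Multiset.count_replicate_self,
            Multiset.count_replicate, if_neg hcx.symm, add_zero]
      _ = {i | f i = c}.ncard := count_map_univ_val_eq_ncard f c
      _ ≤ {i | c ∈ S i}.ncard := Set.ncard_le_ncard fun i (hi : f i = c) => hi ▸ hf i
  · intro hk
    rw [Set.ncard_eq_toFinset_card'] at hk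
    obtain ⟨t, ht, rfl⟩ := Finset.exists_subset_card_eq hk
    refine ⟨t.piecewise (fun _ => c) (fun _ => x), fun i => ?_, map_univ_val_piecewise_const t c x⟩
    by_cases hi : i ∈ t
    · rw [t.piecewise_eq_of_mem _ _ hi]
      exact (Set.mem_toFinset (s := {i | c ∈ S i})).1 (ht hi)
    · rw [t.piecewise_eq_of_notMem _ _ hi]
      exact hx i

end Choice

theorem inW0_iff_replicate_add_replicate {d s : ℕ} (hsd : s ≤ d) (m : Multiset Sig) :
    InW0 d s m ↔
      m = Multiset.replicate 1 Sig.A + Multiset.replicate (d - 1) Sig.X ∨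
      m = Multiset.replicate (s + 1) Sig.H + Multiset.replicate (d - (s + 1)) Sig.X ∨
      m = Multiset.replicate (d - s + 1) Sig.T + Multiset.replicate (d - (d - s + 1)) Sig.X := by
  rw [InW0, Multiset.replicate_one, Multiset.singleton_add, Nat.sub_sub d s 1,
    show d - (d - s + 1) = s - 1 by lia]

theorem exists_choice_inW0_iff {d s : ℕ} (hsd : s ≤ d) {S : Fin d → Set Sig}
    (hX : ∀ i, Sig.X ∈ S i) :
    (∃ f : Fin d → Sig, (∀ i, f i ∈ S i) ∧ InW0 d s (tupleMultiset f)) ↔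
      (∃ i, Sig.A ∈ S i) ∨ s + 1 ≤ {i | Sig.H ∈ S i}.ncard ∨
        d - s + 1 ≤ {i | Sig.T ∈ S i}.ncard := by
  have choice_iff {c : Sig} (hc : c ≠ Sig.X) (k : ℕ) :
      (∃ f : Fin d → Sig, (∀ i, f i ∈ S i) ∧
        tupleMultiset f = Multiset.replicate k c + Multiset.replicate (d - k) Sig.X) ↔
      k ≤ {i | c ∈ S i}.ncard := by
    simpa only [Fintype.card_fin, tupleMultiset] using
      exists_choice_map_eq_replicate_add_replicate_iff hX hc k
  have one_le_iff : 1 ≤ {i | Sig.A ∈ S i}.ncard ↔ ∃ i, Sig.A ∈ S i := Set.ncard_pos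
  simp only [inW0_iff_replicate_add_replicate hsd, and_or_left, exists_or]
  rw [choice_iff (by decide), choice_iff (by decide), choice_iff (by decide), one_le_iff]

/-- The sets `𝐀 = {X}`, `𝐇 = {H, X}`, `𝐓 = {T, X}` and `𝐗 = Σ`, which serve as the labels of the
black output problem of `FDSO(s)`. -/
def blackOutputLabels : Set (Set Sig) :=
  {{Sig.X}, {Sig.H, Sig.X}, {Sig.T, Sig.X}, Set.univ}

section BlackOutputLabels

variable {B : Set Sig}

theorem X_mem_of_mem_blackOutputLabels (hB : B ∈ blackOutputLabels) : Sig.X ∈ B := by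
  rcases hB with rfl | rfl | rfl | rfl <;> simp

theorem A_mem_iff_of_mem_blackOutputLabels (hB : B ∈ blackOutputLabels) :
    Sig.A ∈ B ↔ B = Set.univ := by
  refine ⟨fun hA => ?_, fun h => h ▸ Set.mem_univ _⟩
  rcases hB with rfl | rfl | rfl | rfl <;> simp_all

theorem H_mem_iff_of_mem_blackOutputLabels (hB : B ∈ blackOutputLabels) (hne : B ≠ Set.univ) :
    Sig.H ∈ B ↔ B = {Sig.H, Sig.X} := by
  refine ⟨fun hH => ?_, fun h => h ▸ Set.mem_insert _ _⟩
  rcases hB with rfl | rfl | rfl | rfl <;> simp_all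

theorem T_mem_iff_of_mem_blackOutputLabels (hB : B ∈ blackOutputLabels) (hne : B ≠ Set.univ) :
    Sig.T ∈ B ↔ B = {Sig.T, Sig.X} := by
  refine ⟨fun hT => ?_, fun h => h ▸ Set.mem_insert _ _⟩
  rcases hB with rfl | rfl | rfl | rfl <;> simp_all

end BlackOutputLabels

/-- With `𝐀 = {X}`, `𝐇 = {H,X}`, `𝐓 = {T,X}`, `𝐗 = Σ`: a `d`-tuple of sets,
each among `𝐀, 𝐇, 𝐓, 𝐗`, admits a choice forming a multiset in `W₀` iff some coordinate is
`𝐗`, or at least `s+1` coordinates are `𝐇`, or at least `d-s+1` coordinates are `𝐓`. -/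
theorem stmt_13 (d s : ℕ) (hd : 2 ≤ d) (hs0 : 0 < s) (hsd : s < d)
    (S : Fin d → Set Sig)
    (hS : ∀ i, S i = ({Sig.X} : Set Sig) ∨ S i = ({Sig.H, Sig.X} : Set Sig) ∨
      S i = ({Sig.T, Sig.X} : Set Sig) ∨ S i = Set.univ) :
    (∃ f : Fin d → Sig, (∀ i, f i ∈ S i) ∧ InW0 d s (tupleMultiset f)) ↔
    ((∃ i, S i = Set.univ) ∨
     s + 1 ≤ {i : Fin d | S i = ({Sig.H, Sig.X} : Set Sig)}.ncard ∨
     d - s + 1 ≤ {i : Fin d | S i = ({Sig.T, Sig.X} : Set Sig)}.ncard) := by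
  have hlabel : ∀ i, S i ∈ blackOutputLabels := hS
  rw [exists_choice_inW0_iff hsd.le fun i => X_mem_of_mem_blackOutputLabels (hlabel i)]
  simp only [A_mem_iff_of_mem_blackOutputLabels (hlabel _)]
  refine or_congr_right' fun hno_univ => ?_
  have hne : ∀ i, S i ≠ Set.univ := not_exists.1 hno_univ
  simp only [H_mem_iff_of_mem_blackOutputLabels (hlabel _) (hne _),
    T_mem_iff_of_mem_blackOutputLabels (hlabel _) (hne _)]
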